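/- Let A₁, A₂ be real 2×2 matrices and let P₀ = ℝ², P₁ = (A₁+iI)ℝ², P₂ = (A₂+iI)ℝ² be totally-real planes in ℂ² (i.e., Pⱼ ∩ iPⱼ = {0} for j = 0,1,2). Assume that each of the pairwise unions P₀ ∪ P₁, P₀ ∪ P₂, P₁ ∪ P₂ is locally polynomially convex at the origin, that det[A₁,A₂] > 0, that det Aⱼ < 0 for j = 1,2, and that β(A₁,A₂) > min{ det A₂ · (Tr A₁)², det A₁ · (Tr A₂)² }, where β(A₁,A₂) := 4 det(A₁A₂) − Tr(A₁A₂)·(Tr(A₁A₂) − Tr A₁ · Tr A₂) − (1/4)(Tr A₁ · Tr A₂)². Then P₀ ∪ P₁ ∪ P₂ is locally polynomially convex at the origin. -/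

import Mathlib

open Complex ComplexConjugate

/-- The polynomially convex hull of a set `K ⊆ ℂ²`. -/
def polyHull2 (K : Set (ℂ × ℂ)) : Set (ℂ × ℂ) :=
  { z | ∀ p : MvPolynomial (Fin 2) ℂ,
      ‖MvPolynomial.eval (fun i => if i = 0 then z.1 else z.2) p‖ ≤
        sSup ((fun w : ℂ × ℂ =>
          ‖MvPolynomial.eval (fun i => if i = 0 then w.1 else w.2) p‖) '' K) }

/-- A set `K ⊆ ℂ²` is polynomially convex if it equals its polynomially convex hull. -/
def PolyConvex2 (K : Set (ℂ × ℂ)) : Prop := polyHull2 K = K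

/-- The closed Euclidean ball of radius `r` centred at the origin in `ℂ²`. -/
def eClosedBall (r : ℝ) : Set (ℂ × ℂ) := { z | ‖z.1‖ ^ 2 + ‖z.2‖ ^ 2 ≤ r ^ 2 }

/-- A set is locally polynomially convex at the origin. -/
def LocPolyConvexAt0 (E : Set (ℂ × ℂ)) : Prop :=
  ∃ r > (0 : ℝ), PolyConvex2 (E ∩ eClosedBall r)

/-- The standard real plane `ℝ² = {(x,y) : x, y ∈ ℝ} ⊆ ℂ²`. -/
def plane0 : Set (ℂ × ℂ) := { zw | ∃ x y : ℝ, zw = ((x : ℂ), (y : ℂ)) }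

/-- The plane `(A + iI)ℝ² ⊆ ℂ²` for a real `2×2` matrix `A`. -/
def planeOf (A : Matrix (Fin 2) (Fin 2) ℝ) : Set (ℂ × ℂ) :=
  { zw | ∃ x y : ℝ,
      zw = (((A 0 0 * x + A 0 1 * y : ℝ) : ℂ) + Complex.I * (x : ℂ),
            ((A 1 0 * x + A 1 1 * y : ℝ) : ℂ) + Complex.I * (y : ℂ)) }

/-- A subset `S ⊆ ℂ²` is totally real if `S ∩ iS = {0}`. -/
def TotallyRealSet (S : Set (ℂ × ℂ)) : Prop :=
  S ∩ ((fun v => Complex.I • v) '' S) = {0}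

/-- The quantity `β(A₁,A₂)` from Theorem 3.3 of the paper. -/
noncomputable def betaQ (A₁ A₂ : Matrix (Fin 2) (Fin 2) ℝ) : ℝ :=
  4 * (A₁ * A₂).det - (A₁ * A₂).trace * ((A₁ * A₂).trace - A₁.trace * A₂.trace)
    - (1 / 4) * (A₁.trace * A₂.trace) ^ 2

/-!
Kallin's lemma is applied to the quadratic form `q z = det (z | A₁z)`. It is real on `ℝ²`, it equals
`det (A₁ + iI)` times a real function on `(A₁ + iI)ℝ²`, and the pull-back of `Im q` to
`(A₂ + iI)ℝ²` is a real quadratic form with discriminant `4 (det A₂ (Tr A₁)² - β(A₁, A₂))`. So if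
`β(A₁, A₂)` exceeds `det A₂ (Tr A₁)²`, then `q` maps the three planes into the union of `ℝ` and a
closed double cone about the imaginary axis, and only `0` of the third plane into `ℝ`: the points
with `q` real lie on the first two planes and the others on the last two.

For Kallin's lemma, let `p` be a polynomial mapping the compact set `K` into such a union. Rational
functions approximate `w ↦ sign (Re w) w` uniformly on double cones about `ℝ`, and applying them to
two rotations of `p` shows that `e = -i sign (Im p) p` is a uniform limit of polynomials on `K`. Its
real part is `|Im p|`, and `e = 0` where `p` is real. A point of the hull of `K` is a character `χ`
of `P(K)`. If `χ e ≠ 0`, comparing `f` with `e fᵐ` shows that `χ` only sees `{Im p ≠ 0}`; if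
`χ e = 0`, then `exp (-e)` peaks on `{Im p = 0}` and has `χ`-value `1`, so that `χ` only sees
`{Im p = 0}`.
-/

/-! ### Rational approximation of `sign (Re w) w` -/

/-- The rational function `w ((1+w)ᴺ - (1-w)ᴺ) / ((1+w)ᴺ + (1-w)ᴺ)`. As `N → ∞` it tends to `w` on
the right half-plane and to `-w` on the left one. -/
noncomputable def foldApprox (N : ℕ) (w : ℂ) : ℂ :=
  w * ((1 + w) ^ N - (1 - w) ^ N) / ((1 + w) ^ N + (1 - w) ^ N)

lemma norm_one_add_sq_sub_norm_one_sub_sq (w : ℂ) : ‖1 + w‖ ^ 2 - ‖1 - w‖ ^ 2 = 4 * w.re := by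
  simp only [Complex.sq_norm, Complex.normSq_apply, add_re, sub_re, one_re, add_im, sub_im, one_im]
  ring

lemma one_add_pow_add_one_sub_pow_ne_zero {N : ℕ} {w : ℂ} (hw : w.re = 0 → w = 0) :
    (1 + w) ^ N + (1 - w) ^ N ≠ 0 := by
  intro h
  have hpow : ‖1 + w‖ ^ N = ‖1 - w‖ ^ N := by
    rw [← norm_pow, ← norm_pow, eq_neg_of_add_eq_zero_left h, norm_neg]
  rcases eq_or_ne N 0 with rfl | hN
  · norm_num at h
  · have hnorm := (pow_left_inj₀ (norm_nonneg _) (norm_nonneg _) hN).1 hpow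
    have hre : w.re = 0 := by
      have := norm_one_add_sq_sub_norm_one_sub_sq w
      rw [hnorm] at this
      linarith
    norm_num [hw hre] at h

lemma natCast_mul_pow_mul_sub_le {R : Type*} [CommRing R] [LinearOrder R]
    [IsStrictOrderedRing R] {u v : R} (hv : 0 ≤ v) (hvu : v ≤ u) (N : ℕ) :
    N * v ^ N * (u - v) ≤ u * (u ^ N - v ^ N) := by
  induction N with
  | zero => simp
  | succ N ih =>
    have hu := hv.trans hvu
    have hpos : 0 ≤ (N + 1) * v ^ N * (u - v) * (u - v) := by
      have := sub_nonneg.2 hvu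
      positivity
    push_cast
    linear_combination u * ih + hpos

lemma foldApprox_neg (N : ℕ) (w : ℂ) : foldApprox N (-w) = foldApprox N w := by
  simp only [foldApprox, sub_neg_eq_add, ← sub_eq_add_neg]
  ring

lemma norm_foldApprox_sub_self_le {w : ℂ} (hw : 0 < w.re) {N : ℕ} (hN : N ≠ 0) :
    ‖foldApprox N w - w‖ ≤ ‖w‖ * (1 + ‖w‖) ^ 2 / (N * w.re) := by
  set u := ‖1 + w‖
  set v := ‖1 - w‖
  have hv0 : 0 ≤ v := norm_nonneg _
  have hsq : u ^ 2 - v ^ 2 = 4 * w.re := norm_one_add_sq_sub_norm_one_sub_sq w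
  have hvu : v < u := lt_of_pow_lt_pow_left₀ 2 (norm_nonneg _) (by linarith)
  have hu1 : u ≤ 1 + ‖w‖ := (norm_add_le _ _).trans_eq (by rw [norm_one])
  have hD : (1 + w) ^ N + (1 - w) ^ N ≠ 0 :=
    one_add_pow_add_one_sub_pow_ne_zero fun h => absurd h hw.ne'
  have hDle : u ^ N - v ^ N ≤ ‖(1 + w) ^ N + (1 - w) ^ N‖ := by
    simpa only [norm_pow, norm_neg, sub_neg_eq_add] using
      norm_sub_norm_le ((1 + w) ^ N) (-(1 - w) ^ N)
  have hgap : 2 * w.re * (N * v ^ N) ≤ u ^ 2 * (u ^ N - v ^ N) := by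
    have hpow := natCast_mul_pow_mul_sub_le hv0 hvu.le N
    have : 2 * w.re ≤ u * (u - v) := by nlinarith
    calc 2 * w.re * (N * v ^ N) ≤ u * (u - v) * (N * v ^ N) := by gcongr
      _ = u * (N * v ^ N * (u - v)) := by ring
      _ ≤ u * (u * (u ^ N - v ^ N)) := by gcongr
      _ = _ := by ring
  have herr : foldApprox N w - w = -(2 * w * (1 - w) ^ N) / ((1 + w) ^ N + (1 - w) ^ N) := by
    rw [foldApprox, div_sub' hD]
    ring
  rw [herr, norm_div, norm_neg, norm_mul, norm_mul, norm_pow, RCLike.norm_ofNat,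
    div_le_div_iff₀ (norm_pos_iff.2 hD) (by positivity)]
  calc 2 * ‖w‖ * v ^ N * (N * w.re) = ‖w‖ * (2 * w.re * (N * v ^ N)) := by ring
    _ ≤ ‖w‖ * (u ^ 2 * (u ^ N - v ^ N)) := by gcongr
    _ ≤ ‖w‖ * ((1 + ‖w‖) ^ 2 * ‖(1 + w) ^ N + (1 - w) ^ N‖) := by
      have : 0 ≤ u ^ N - v ^ N := sub_nonneg.2 (by gcongr)
      gcongr
    _ = _ := by ring

lemma norm_foldApprox_sub_sign_mul_le {c B : ℝ} (hc : 0 < c) {w : ℂ} (hcone : c * ‖w‖ ≤ |w.re|)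
    (hB : ‖w‖ ≤ B) {N : ℕ} (hN : N ≠ 0) :
    ‖foldApprox N w - Real.sign w.re * w‖ ≤ (1 + B) ^ 2 / (c * N) := by
  have main : ∀ w : ℂ, c * ‖w‖ ≤ w.re → 0 < w.re → ‖w‖ ≤ B →
      ‖foldApprox N w - w‖ ≤ (1 + B) ^ 2 / (c * N) := fun w hcw hw hB => by
    refine (norm_foldApprox_sub_self_le hw hN).trans ?_
    rw [div_le_div_iff₀ (by positivity) (by positivity)]
    calc ‖w‖ * (1 + ‖w‖) ^ 2 * (c * N) = (c * ‖w‖) * (1 + ‖w‖) ^ 2 * N := by ring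
      _ ≤ w.re * (1 + B) ^ 2 * N := by gcongr
      _ = _ := by ring
  rcases lt_trichotomy w.re 0 with hneg | hzero | hpos
  · rw [abs_of_neg hneg] at hcone
    rw [Real.sign_of_neg hneg, ← foldApprox_neg]
    simpa using main (-w) (by simpa using hcone) (by simpa using hneg) (by simpa using hB)
  · have : w = 0 := by
      rw [hzero, abs_zero] at hcone
      exact norm_le_zero_iff.1 (nonpos_of_mul_nonpos_right hcone hc)
    simp only [this, foldApprox, zero_mul, zero_div, mul_zero, sub_zero, norm_zero]
    positivity
  · rw [abs_of_pos hpos] at hcone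
    simpa [Real.sign_of_pos hpos] using main w hcone hpos hB

lemma sign_add_add_sign_sub {a b : ℝ} (h : a = 0 ∨ |b| < |a|) :
    Real.sign (a + b) + Real.sign (a - b) = 2 * Real.sign a := by
  rcases h with rfl | hb
  · rw [zero_add, zero_sub, Real.sign_neg, Real.sign_zero]
    ring
  · rcases lt_trichotomy a 0 with ha | rfl | ha
    · rw [abs_of_neg ha, abs_lt] at hb
      rw [Real.sign_of_neg ha, Real.sign_of_neg (by linarith), Real.sign_of_neg (by linarith)]
      norm_num
    · exact absurd hb (by simp)
    · rw [abs_of_pos ha, abs_lt] at hb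
      rw [Real.sign_of_pos ha, Real.sign_of_pos (by linarith), Real.sign_of_pos (by linarith)]
      norm_num

/-! ### Closed function algebras -/

section ClosedSubalgebra

open Filter Topology

lemma notMem_spectrum_of_ray {A : Type*} [NormedRing A] [NormedAlgebra ℂ A] [CompleteSpace A]
    (S : Subalgebra ℂ A) [IsClosed (S : Set A)] (a : S) {z : ℂ} (hz : z ≠ 0)
    (hray : ∀ t : ℝ, 1 ≤ t → (t : ℂ) * z ∉ spectrum ℂ (a : A)) : z ∉ spectrum ℂ a := by
  intro hmem
  obtain ⟨R, hR⟩ :=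
    (Subalgebra.spectrum_isBounded_connectedComponentIn S a hmem).exists_norm_le
  have hsub : (fun t : ℝ => (t : ℂ) * z) '' Set.Ici 1 ⊆
      connectedComponentIn (spectrum ℂ (a : A))ᶜ z := by
    refine IsPreconnected.subset_connectedComponentIn
      (isPreconnected_Ici.image _ (by fun_prop)) ⟨1, Set.self_mem_Ici, by simp⟩ ?_
    rintro _ ⟨t, ht, rfl⟩
    exact hray t ht
  obtain ⟨t, htR, ht1⟩ := ((eventually_gt_atTop (R / ‖z‖)).and
    (eventually_ge_atTop (1 : ℝ))).exists
  have hle := hR _ (hsub ⟨t, ht1, rfl⟩)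
  rw [norm_mul, Complex.norm_of_nonneg (zero_le_one.trans ht1)] at hle
  exact ((div_lt_iff₀ (norm_pos_iff.2 hz)).1 htR).not_ge hle

lemma isUnit_aeval_of_eval_ne_zero {A : Type*} [NormedRing A] [NormedAlgebra ℂ A] [CompleteSpace A]
    {a : A} {p : Polynomial ℂ} (h : ∀ z ∈ spectrum ℂ a, p.eval z ≠ 0) :
    IsUnit (Polynomial.aeval a p) := by
  nontriviality A
  rw [← spectrum.zero_notMem_iff ℂ, spectrum.map_polynomial_aeval]
  rintro ⟨z, hz, hz0⟩
  exact h z hz hz0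

variable {X : Type*} [TopologicalSpace X] [CompactSpace X] {T : Subalgebra ℂ C(X, ℂ)}

lemma exists_eq_foldApprox [hT : IsClosed (T : Set C(X, ℂ))] (w : T)
    (hw : ∀ x, (w.1 x).re = 0 → w.1 x = 0) (N : ℕ) :
    ∃ g : T, ∀ x, g.1 x = foldApprox N (w.1 x) := by
  have : CompleteSpace T := hT.completeSpace_coe
  have hspec : ∀ z ∈ spectrum ℂ w, z.re = 0 → z = 0 := by
    intro z hz hre
    by_contra hne
    refine notMem_spectrum_of_ray T w hne (fun t ht hmem => ?_) hz
    rw [ContinuousMap.spectrum_eq_range] at hmem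
    obtain ⟨x, hx⟩ := hmem
    have h0 := hw x (by rw [hx, re_ofReal_mul, hre, mul_zero])
    rw [hx] at h0
    exact mul_ne_zero (ofReal_ne_zero.2 (by linarith)) hne h0
  obtain ⟨D, hD⟩ : IsUnit ((1 + w) ^ N + (1 - w) ^ N) := by
    have := isUnit_aeval_of_eval_ne_zero (a := w)
      (p := (1 + Polynomial.X) ^ N + (1 - Polynomial.X) ^ N) fun z hz => by
        simpa using one_add_pow_add_one_sub_pow_ne_zero (hspec z hz)
    simpa using this
  refine ⟨w * ((1 + w) ^ N - (1 - w) ^ N) * ↑D⁻¹, fun x => ?_⟩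
  have hDx : ((1 + w.1 x) ^ N + (1 - w.1 x) ^ N) * (D⁻¹ : Tˣ).1.1 x = 1 := by
    have := congrArg (fun f : T => f.1 x) D.mul_inv
    rw [hD] at this
    simpa using this
  rw [foldApprox, eq_div_iff (left_ne_zero_of_mul_eq_one hDx)]
  change w.1 x * ((1 + w.1 x) ^ N - (1 - w.1 x) ^ N) * (D⁻¹ : Tˣ).1.1 x * _ = _
  linear_combination (w.1 x * ((1 + w.1 x) ^ N - (1 - w.1 x) ^ N)) * hDx

lemma exists_eq_sign_re_mul [hT : IsClosed (T : Set C(X, ℂ))] (w : T) {c : ℝ} (hc : 0 < c)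
    (hcone : ∀ x, c * ‖w.1 x‖ ≤ |(w.1 x).re|) :
    ∃ f : T, ∀ x, f.1 x = Real.sign (w.1 x).re * w.1 x := by
  have hw : ∀ x, (w.1 x).re = 0 → w.1 x = 0 := fun x hx => by
    have := hcone x
    rw [hx, abs_zero] at this
    exact norm_le_zero_iff.1 (nonpos_of_mul_nonpos_right this hc)
  choose g hg using exists_eq_foldApprox w hw
  have hunif : TendstoUniformly (fun N x => (g N).1 x)
      (fun x => Real.sign (w.1 x).re * w.1 x) atTop := by
    rw [Metric.tendstoUniformly_iff]
    intro δ hδ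
    have hlim : Tendsto (fun N : ℕ => (1 + ‖w.1‖) ^ 2 / (c * N)) atTop (𝓝 0) :=
      tendsto_const_nhds.div_atTop (tendsto_natCast_atTop_atTop.const_mul_atTop hc)
    filter_upwards [hlim.eventually_lt_const hδ, eventually_ne_atTop 0] with N hNδ hN x
    rw [dist_comm, dist_eq_norm, hg]
    exact (norm_foldApprox_sub_sign_mul_le hc (hcone x) (w.1.norm_coe_le_norm x) hN).trans_lt hNδ
  let f : C(X, ℂ) := ⟨_, hunif.continuous (.of_forall fun N => (g N).1.continuous)⟩
  have hlim : Tendsto (fun N => (g N).1) atTop (𝓝 f) :=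
    ContinuousMap.tendsto_iff_tendstoUniformly.2 hunif
  exact ⟨⟨f, hT.mem_of_tendsto hlim (.of_forall fun N => (g N).2)⟩, fun _ => rfl⟩

lemma exists_eq_sign_im_add_mul [IsClosed (T : Set C(X, ℂ))] (p : T) {ε s : ℝ} (hs : s ≠ 0)
    (hsε : 2 * |s| ≤ ε) (hp : ∀ x, (p.1 x).im = 0 ∨ ε * ‖p.1 x‖ ≤ |(p.1 x).im|) :
    ∃ f : T, ∀ x, f.1 x = Real.sign ((p.1 x).im + s * (p.1 x).re) * p.1 x := by
  -- multiplication by `κ` turns the real line and the double cone into one double cone about `ℝ`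
  set κ : ℂ := ⟨s, -1⟩
  have hκ : κ ≠ 0 := fun h => hs (congrArg re h)
  have hre : ∀ z : ℂ, (κ * z).re = z.im + s * z.re := fun z => by
    rw [mul_re]
    ring
  have hlower : ∀ x, |s| * ‖p.1 x‖ ≤ |(p.1 x).im + s * (p.1 x).re| := fun x => by
    rcases hp x with him | hcone
    · have : ‖p.1 x‖ = |(p.1 x).re| := by
        rw [← (abs_re_eq_norm (z := p.1 x)).2 him]
      rw [him, zero_add, abs_mul, this]
    · calc |s| * ‖p.1 x‖ ≤ ε * ‖p.1 x‖ - |s| * ‖p.1 x‖ := by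
            nlinarith [norm_nonneg (p.1 x)]
        _ ≤ |(p.1 x).im| - |s * (p.1 x).re| := by
            rw [abs_mul]
            gcongr
            exact abs_re_le_norm _
        _ ≤ _ := by simpa using abs_sub_abs_le_abs_sub (p.1 x).im (-(s * (p.1 x).re))
  obtain ⟨f, hf⟩ := exists_eq_sign_re_mul (κ • p) (c := |s| / ‖κ‖)
    (div_pos (abs_pos.2 hs) (norm_pos_iff.2 hκ)) fun x => by
      change _ * ‖κ * p.1 x‖ ≤ |(κ * p.1 x).re|
      rw [hre, norm_mul, ← mul_assoc, div_mul_cancel₀ _ (norm_ne_zero_iff.2 hκ)]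
      exact hlower x
  refine ⟨κ⁻¹ • f, fun x => ?_⟩
  change κ⁻¹ * f.1 x = _
  rw [hf]
  change κ⁻¹ * (Real.sign (κ * p.1 x).re * (κ * p.1 x)) = _
  rw [hre]
  field_simp

lemma exists_eq_sign_im_mul [IsClosed (T : Set C(X, ℂ))] (p : T) {ε : ℝ} (hε : 0 < ε)
    (hp : ∀ x, (p.1 x).im = 0 ∨ ε * ‖p.1 x‖ ≤ |(p.1 x).im|) :
    ∃ f : T, ∀ x, f.1 x = Real.sign (p.1 x).im * p.1 x := by
  obtain ⟨f₁, hf₁⟩ := exists_eq_sign_im_add_mul p (s := ε / 2) (by positivity)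
    (by rw [abs_of_pos (by positivity)]; linarith) hp
  obtain ⟨f₂, hf₂⟩ := exists_eq_sign_im_add_mul p (s := -(ε / 2)) (by linarith)
    (by rw [abs_neg, abs_of_pos (by positivity)]; linarith) hp
  refine ⟨(2⁻¹ : ℂ) • (f₁ + f₂), fun x => ?_⟩
  have hsmall : (p.1 x).im = 0 ∨ |ε / 2 * (p.1 x).re| < |(p.1 x).im| := by
    refine or_iff_not_imp_left.2 fun him => ?_
    have hcone := (hp x).resolve_left him
    have habs := abs_re_le_norm (p.1 x)
    rw [abs_mul, abs_of_pos (by positivity)]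
    nlinarith [abs_pos.2 him]
  have hsign : (Real.sign ((p.1 x).im + ε / 2 * (p.1 x).re) : ℂ)
      + Real.sign ((p.1 x).im - ε / 2 * (p.1 x).re) = 2 * Real.sign (p.1 x).im :=
    mod_cast sign_add_add_sign_sub hsmall
  change 2⁻¹ * (f₁.1 x + f₂.1 x) = _
  rw [hf₁, hf₂, neg_mul, ← sub_eq_add_neg]
  linear_combination 2⁻¹ * p.1 x * hsign

end ClosedSubalgebra

/-! ### Characters of function algebras -/

section Character

open Filter Topology

variable {X : Type*} [TopologicalSpace X] [CompactSpace X] {T : Subalgebra ℂ C(X, ℂ)}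

/-- The character `χ` of the function algebra `T` is controlled by the values on `E`: this is how
the evaluation at a point of the polynomial hull of `E` acts. -/
def IsDominatedOn (χ : T →ₐ[ℂ] ℂ) (E : Set X) : Prop :=
  ∀ (f : T) (M : ℝ), 0 ≤ M → (∀ x ∈ E, ‖f.1 x‖ ≤ M) → ‖χ f‖ ≤ M

lemma le_of_forall_mul_pow_le {c C y M : ℝ} (hc : 0 < c) (hM : 0 ≤ M)
    (h : ∀ m : ℕ, c * y ^ m ≤ C * M ^ m) : y ≤ M := by
  by_contra! hlt
  have hy : 0 < y := hM.trans_lt hlt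
  have hlim : Tendsto (fun m : ℕ => C * (M / y) ^ m) atTop (𝓝 (C * 0)) :=
    (tendsto_pow_atTop_nhds_zero_of_lt_one (by positivity) ((div_lt_one hy).2 hlt)).const_mul C
  rw [mul_zero] at hlim
  refine hc.not_ge (ge_of_tendsto' hlim fun m => ?_)
  rw [div_pow, ← mul_div_assoc, le_div_iff₀ (by positivity)]
  exact h m

variable [hT : IsClosed (T : Set C(X, ℂ))]

lemma norm_character_le_of_forall_norm_le (χ : T →ₐ[ℂ] ℂ) {f : T} {M : ℝ} (hM : 0 ≤ M)
    (h : ∀ x, ‖f.1 x‖ ≤ M) : ‖χ f‖ ≤ M := by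
  have : CompleteSpace T := hT.completeSpace_coe
  rcases isEmpty_or_nonempty X with hX | hX
  · have hf : f = 0 := Subtype.ext (ContinuousMap.ext fun x => hX.elim x)
    rwa [hf, map_zero, norm_zero]
  · have : NormOneClass T := ⟨norm_one (α := C(X, ℂ))⟩
    exact (AlgHom.norm_apply_le_self χ f).trans ((ContinuousMap.norm_le _ hM).2 h)

lemma isDominatedOn_ne_zero {χ : T →ₐ[ℂ] ℂ} {e : T} (he : χ e ≠ 0) :
    IsDominatedOn χ {x | e.1 x ≠ 0} := by
  intro f M hM hf
  refine le_of_forall_mul_pow_le (C := ‖e.1‖) (norm_pos_iff.2 he) hM fun m => ?_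
  rw [← norm_pow, ← norm_mul, ← map_pow, ← map_mul]
  refine norm_character_le_of_forall_norm_le χ (by positivity) fun x => ?_
  change ‖e.1 x * f.1 x ^ m‖ ≤ _
  rw [norm_mul, norm_pow]
  by_cases hx : e.1 x = 0
  · rw [hx, norm_zero, zero_mul]
    positivity
  · have := e.1.norm_coe_le_norm x
    have := hf x hx
    gcongr

lemma isDominatedOn_norm_eq_one {χ : T →ₐ[ℂ] ℂ} {F : T} (hχ : χ F = 1)
    (hF : ∀ x, ‖F.1 x‖ ≤ 1) : IsDominatedOn χ {x | ‖F.1 x‖ = 1} := by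
  intro f M hM hf
  refine le_of_forall_gt_imp_ge_of_dense fun M' hM' => ?_
  have hcompact : IsCompact {x | M' ≤ ‖f.1 x‖} :=
    (isClosed_le continuous_const f.1.continuous.norm).isCompact
  obtain ⟨ρ, hρ0, hρ1, hρ⟩ : ∃ ρ, 0 ≤ ρ ∧ ρ < 1 ∧ ∀ x, M' ≤ ‖f.1 x‖ → ‖F.1 x‖ ≤ ρ := by
    rcases Set.eq_empty_or_nonempty {x | M' ≤ ‖f.1 x‖} with hempty | hne
    · exact ⟨0, le_rfl, one_pos, fun x hx => absurd hx (Set.eq_empty_iff_forall_notMem.1 hempty x)⟩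
    · obtain ⟨x₀, hx₀, hmax⟩ := hcompact.exists_isMaxOn hne F.1.continuous.norm.continuousOn
      exact ⟨_, norm_nonneg _,
        (hF x₀).lt_of_ne fun h1 => (hM'.trans_le hx₀).not_ge (hf x₀ h1), hmax⟩
  have hM'0 : 0 < M' := hM.trans_lt hM'
  obtain ⟨m, hm⟩ : ∃ m : ℕ, ‖f.1‖ * ρ ^ m ≤ M' := by
    have hlim := (tendsto_pow_atTop_nhds_zero_of_lt_one hρ0 hρ1).const_mul ‖f.1‖
    rw [mul_zero] at hlim
    exact (hlim.eventually_le_const hM'0).exists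
  have hχf : χ (f * F ^ m) = χ f := by rw [map_mul, map_pow, hχ, one_pow, mul_one]
  rw [← hχf]
  refine norm_character_le_of_forall_norm_le χ hM'0.le fun x => ?_
  change ‖f.1 x * F.1 x ^ m‖ ≤ M'
  rw [norm_mul, norm_pow]
  rcases le_total M' ‖f.1 x‖ with hx | hx
  · refine le_trans ?_ hm
    have := f.1.norm_coe_le_norm x
    have := hρ x hx
    gcongr
  · exact (mul_le_of_le_one_right (norm_nonneg _)
      (pow_le_one₀ (norm_nonneg _) (hF x))).trans hx

lemma isDominatedOn_eq_zero {χ : T →ₐ[ℂ] ℂ} {e : T} (hχ : χ e = 0)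
    (he : ∀ x, e.1 x = 0 ∨ 0 < (e.1 x).re) : IsDominatedOn χ {x | e.1 x = 0} := by
  have : CompleteSpace T := hT.completeSpace_coe
  let _ : NormedAlgebra ℚ T := NormedAlgebra.restrictScalars ℚ ℂ T
  have hexp : ∀ ψ : T →ₐ[ℂ] ℂ, Continuous ψ → ψ (NormedSpace.exp (-e)) = exp (-ψ e) :=
    fun ψ hψ => by rw [NormedSpace.map_exp ψ hψ, map_neg, exp_eq_exp_ℂ]
  have hnorm : ∀ x, ‖(NormedSpace.exp (-e)).1 x‖ = Real.exp (-(e.1 x).re) := fun x => by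
    have := hexp ((ContinuousMap.evalAlgHom ℂ ℂ x).comp T.val)
      ((continuous_eval_const x).comp continuous_subtype_val)
    change (NormedSpace.exp (-e)).1 x = _ at this
    rw [this, norm_exp, neg_re]
    rfl
  have hset : {x | e.1 x = 0} = {x | ‖(NormedSpace.exp (-e)).1 x‖ = 1} := by
    ext x
    rw [Set.mem_ofPred_eq, Set.mem_ofPred_eq, hnorm, Real.exp_eq_one_iff, neg_eq_zero]
    exact ⟨fun h => by rw [h, zero_re], fun h => (he x).resolve_right h.not_gt⟩
  rw [hset]
  refine isDominatedOn_norm_eq_one ?_ fun x => ?_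
  · rw [hexp χ (map_continuous χ), hχ, neg_zero, exp_zero]
  · rw [hnorm, Real.exp_le_one_iff, neg_nonpos]
    rcases he x with h | h
    · rw [h, zero_re]
    · exact h.le

theorem isDominatedOn_im_eq_zero_or_im_ne_zero (χ : T →ₐ[ℂ] ℂ) (p : T) {ε : ℝ} (hε : 0 < ε)
    (hp : ∀ x, (p.1 x).im = 0 ∨ ε * ‖p.1 x‖ ≤ |(p.1 x).im|) :
    IsDominatedOn χ {x | (p.1 x).im = 0} ∨ IsDominatedOn χ {x | (p.1 x).im ≠ 0} := by
  obtain ⟨f, hf⟩ := exists_eq_sign_im_mul p hε hp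
  let e : T := (-I) • f
  have he : ∀ x, e.1 x = -I * (Real.sign (p.1 x).im * p.1 x) := fun x => by rw [← hf]; rfl
  have hre : ∀ x, (e.1 x).re = Real.sign (p.1 x).im * (p.1 x).im := fun x => by
    rw [he, neg_mul, neg_re, I_mul_re, neg_neg, im_ofReal_mul]
  have hpos : ∀ x, (p.1 x).im ≠ 0 → 0 < (e.1 x).re := fun x hx => by
    rw [hre]
    exact Real.sign_mul_pos_of_ne_zero _ hx
  have hzero : ∀ x, e.1 x = 0 ↔ (p.1 x).im = 0 := fun x => by
    refine ⟨fun h => by_contra fun hx => (hpos x hx).ne' (by rw [h, zero_re]), fun h => ?_⟩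
    rw [he, h, Real.sign_zero, ofReal_zero, zero_mul, mul_zero]
  simp only [← hzero, ne_eq]
  rcases eq_or_ne (χ e) 0 with hχ | hχ
  · exact .inl (isDominatedOn_eq_zero hχ fun x =>
      or_iff_not_imp_left.2 fun hx => hpos x (mt (hzero x).2 hx))
  · exact .inr (isDominatedOn_ne_zero hχ)

end Character

/-! ### Polynomial hulls -/

section Hull

open MvPolynomial (eval)

/-- The point of `ℂ × ℂ` as a function on `Fin 2`, in the form in which polynomials are evaluated
in `polyHull2`. -/
def coords (z : ℂ × ℂ) : Fin 2 → ℂ := fun i => if i = 0 then z.1 else z.2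

lemma continuous_coords : Continuous coords :=
  continuous_pi fun i => by
    fin_cases i
    exacts [continuous_fst, continuous_snd]

lemma continuous_eval_coords (P : MvPolynomial (Fin 2) ℂ) :
    Continuous fun z => eval (coords z) P :=
  (MvPolynomial.continuous_eval P).comp continuous_coords

variable {K L : Set (ℂ × ℂ)}

lemma isClosed_polyHull2 (K : Set (ℂ × ℂ)) : IsClosed (polyHull2 K) := by
  rw [polyHull2, Set.ofPred_forall]
  exact isClosed_iInter fun P => isClosed_le (continuous_eval_coords P).norm continuous_const

lemma mem_polyHull2_iff (hK : Bornology.IsBounded K) {z : ℂ × ℂ} :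
    z ∈ polyHull2 K ↔ ∀ (P : MvPolynomial (Fin 2) ℂ) (M : ℝ), 0 ≤ M →
      (∀ w ∈ K, ‖eval (coords w) P‖ ≤ M) → ‖eval (coords z) P‖ ≤ M := by
  refine ⟨fun hz P M hM hPM => (hz P).trans (Real.sSup_le ?_ hM), fun h P => h P _ ?_ ?_⟩
  · rintro _ ⟨w, hw, rfl⟩
    exact hPM w hw
  · refine Real.sSup_nonneg ?_
    rintro _ ⟨w, -, rfl⟩
    exact norm_nonneg _
  · have hbdd : BddAbove ((fun w => ‖eval (coords w) P‖) '' K) :=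
      (hK.isCompact_closure.bddAbove_image (continuous_eval_coords P).norm.continuousOn).mono
        (Set.image_mono subset_closure)
    exact fun w hw => le_csSup hbdd ⟨w, hw, rfl⟩

lemma subset_polyHull2 (hK : Bornology.IsBounded K) : K ⊆ polyHull2 K := fun z hz =>
  (mem_polyHull2_iff hK).2 fun _ _ _ h => h z hz

lemma polyHull2_mono (hL : Bornology.IsBounded L) (hKL : K ⊆ L) : polyHull2 K ⊆ polyHull2 L :=
  fun _ hz => (mem_polyHull2_iff hL).2 fun P M hM h =>
    (mem_polyHull2_iff (hL.subset hKL)).1 hz P M hM fun w hw => h w (hKL hw)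

lemma PolyConvex2.isClosed (hK : PolyConvex2 K) : IsClosed K := hK ▸ isClosed_polyHull2 K

lemma PolyConvex2.inter (hK : PolyConvex2 K) (hL : PolyConvex2 L) (hKb : Bornology.IsBounded K)
    (hLb : Bornology.IsBounded L) : PolyConvex2 (K ∩ L) := by
  refine (Set.subset_inter ?_ ?_).antisymm
    (subset_polyHull2 (hKb.subset Set.inter_subset_left))
  · exact (polyHull2_mono hKb Set.inter_subset_left).trans_eq hK
  · exact (polyHull2_mono hLb Set.inter_subset_right).trans_eq hL

/-- The restriction of polynomials to `K`, as a homomorphism into the continuous functions. -/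
noncomputable def polyRestrict (K : Set (ℂ × ℂ)) : MvPolynomial (Fin 2) ℂ →ₐ[ℂ] C(K, ℂ) where
  toFun P := ⟨fun z => eval (coords z) P,
    (continuous_eval_coords P).comp continuous_subtype_val⟩
  map_one' := by ext; simp
  map_mul' _ _ := by ext; simp
  map_zero' := by ext; simp
  map_add' _ _ := by ext; simp
  commutes' _ := by ext; simp

/-- The algebra `P(K)` of uniform limits of polynomials on `K`. -/
noncomputable def polyAlgebra (K : Set (ℂ × ℂ)) [CompactSpace K] : Subalgebra ℂ C(K, ℂ) :=
  (polyRestrict K).range.topologicalClosure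

instance isClosed_polyAlgebra [CompactSpace K] : IsClosed (polyAlgebra K : Set C(K, ℂ)) :=
  Subalgebra.isClosed_topologicalClosure _

/-- The restriction map from polynomials to `P(K)`. -/
noncomputable def toPolyAlgebra (K : Set (ℂ × ℂ)) [CompactSpace K] :
    MvPolynomial (Fin 2) ℂ →ₐ[ℂ] polyAlgebra K :=
  (polyRestrict K).codRestrict _ fun P =>
    Subalgebra.le_topologicalClosure _ ((polyRestrict K).mem_range_self P)

lemma denseRange_toPolyAlgebra [CompactSpace K] : DenseRange (toPolyAlgebra K) := by
  refine Subtype.dense_iff.2 fun f hf => ?_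
  rw [← Set.range_comp]
  exact hf

lemma exists_character_of_mem_polyHull2 [CompactSpace K] {z : ℂ × ℂ} (hz : z ∈ polyHull2 K) :
    ∃ χ : polyAlgebra K →ₐ[ℂ] ℂ,
      ∀ P, χ (toPolyAlgebra K P) = eval (coords z) P := by
  have hK : IsCompact K := isCompact_iff_compactSpace.2 inferInstance
  let φ : MvPolynomial (Fin 2) ℂ →ₗ[ℂ] ℂ := (MvPolynomial.aeval (coords z)).toLinearMap
  let χ : polyAlgebra K →L[ℂ] ℂ := φ.extendOfNorm (toPolyAlgebra K).toLinearMap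
  have hnorm : ∀ P, ‖φ P‖ ≤ 1 * ‖(toPolyAlgebra K).toLinearMap P‖ := fun P => by
    rw [one_mul]
    exact (mem_polyHull2_iff hK.isBounded).1 hz P _ (norm_nonneg _) fun w hw =>
      (polyRestrict K P).norm_coe_le_norm ⟨w, hw⟩
  have hχ : ∀ P, χ (toPolyAlgebra K P) = eval (coords z) P :=
    LinearMap.extendOfNorm_eq denseRange_toPolyAlgebra ⟨1, hnorm⟩
  have hmul : ∀ f g, χ (f * g) = χ f * χ g := fun f g => by
    refine denseRange_toPolyAlgebra.induction_on₂
      (p := fun f g => χ (f * g) = χ f * χ g) ?_ (fun P Q => ?_) f g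
    · exact isClosed_eq (by fun_prop) (by fun_prop)
    · rw [← map_mul, hχ, hχ, hχ, map_mul]
  refine ⟨AlgHom.ofLinearMap χ.toLinearMap ?_ hmul, hχ⟩
  have hone := hχ 1
  rw [map_one (toPolyAlgebra K), map_one (eval _)] at hone
  exact hone

/-- Kallin's lemma, in the form where the values on the two pieces may accumulate at `0`. -/
theorem polyHull2_subset_union_of_im [hK : CompactSpace K] (P : MvPolynomial (Fin 2) ℂ) {ε : ℝ}
    (hε : 0 < ε) (hP : ∀ z ∈ K, (eval (coords z) P).im = 0 ∨
      ε * ‖eval (coords z) P‖ ≤ |(eval (coords z) P).im|) :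
    polyHull2 K ⊆ polyHull2 {z ∈ K | (eval (coords z) P).im = 0} ∪
      polyHull2 {z ∈ K | (eval (coords z) P).im ≠ 0} := by
  have hKb : Bornology.IsBounded K := (isCompact_iff_compactSpace.2 hK).isBounded
  intro z hz
  obtain ⟨χ, hχ⟩ := exists_character_of_mem_polyHull2 hz
  have hull_of_dominated : ∀ Y : Set (ℂ × ℂ), IsDominatedOn χ {x : K | x.1 ∈ Y} →
      z ∈ polyHull2 (K ∩ Y) := fun Y hY =>
    (mem_polyHull2_iff (hKb.subset Set.inter_subset_left)).2 fun Q M hM hQ => by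
      rw [← hχ]
      exact hY _ M hM fun x hx => hQ x ⟨x.2, hx⟩
  exact (isDominatedOn_im_eq_zero_or_im_ne_zero χ (toPolyAlgebra K P) hε fun x => hP x x.2).imp
    (hull_of_dominated _) (hull_of_dominated _)

lemma mem_eClosedBall {r : ℝ} {z : ℂ × ℂ} :
    z ∈ eClosedBall r ↔ ‖z.1‖ ^ 2 + ‖z.2‖ ^ 2 ≤ r ^ 2 := Iff.rfl

lemma isBounded_eClosedBall (r : ℝ) : Bornology.IsBounded (eClosedBall r) := by
  refine isBounded_iff_forall_norm_le.2 ⟨|r|, fun z hz => ?_⟩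
  rw [mem_eClosedBall] at hz
  refine max_le (abs_le_of_sq_le_sq' ?_ (abs_nonneg r)).2 (abs_le_of_sq_le_sq' ?_ (abs_nonneg r)).2
  all_goals
    rw [sq_abs]
    nlinarith [sq_nonneg ‖z.1‖, sq_nonneg ‖z.2‖]

lemma polyConvex2_eClosedBall (r : ℝ) : PolyConvex2 (eClosedBall r) := by
  refine Set.Subset.antisymm (fun z hz => ?_) (subset_polyHull2 (isBounded_eClosedBall r))
  let P : MvPolynomial (Fin 2) ℂ :=
    .C (conj z.1) * .X 0 + .C (conj z.2) * .X 1
  have hP : ∀ w, eval (coords w) P = conj z.1 * w.1 + conj z.2 * w.2 := fun w => by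
    simp [P, coords]
  have hPz : ‖eval (coords z) P‖ = ‖z.1‖ ^ 2 + ‖z.2‖ ^ 2 := by
    rw [hP, conj_mul', conj_mul']
    norm_cast
    exact abs_of_nonneg (by positivity)
  have hPw : ∀ w ∈ eClosedBall r, ‖eval (coords w) P‖ ≤
      (‖z.1‖ ^ 2 + ‖z.2‖ ^ 2 + r ^ 2) / 2 := fun w hw => by
    rw [mem_eClosedBall] at hw
    rw [hP]
    refine (norm_add_le _ _).trans ?_
    rw [norm_mul, norm_mul, norm_conj, norm_conj]
    nlinarith [two_mul_le_add_sq ‖z.1‖ ‖w.1‖, two_mul_le_add_sq ‖z.2‖ ‖w.2‖]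
  have := (mem_polyHull2_iff (isBounded_eClosedBall r)).1 hz P _ (by positivity) hPw
  rw [mem_eClosedBall]
  linarith

lemma LocPolyConvexAt0.exists_forall_le {E : Set (ℂ × ℂ)} (hE : LocPolyConvexAt0 E) :
    ∃ r > (0 : ℝ), ∀ s, 0 ≤ s → s ≤ r → PolyConvex2 (E ∩ eClosedBall s) := by
  obtain ⟨r, hr, hconv⟩ := hE
  refine ⟨r, hr, fun s hs hsr => ?_⟩
  have hsub : eClosedBall s ⊆ eClosedBall r := fun z hz =>
    (mem_eClosedBall.1 hz).trans (pow_le_pow_left₀ hs hsr 2)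
  have := hconv.inter (polyConvex2_eClosedBall s)
    ((isBounded_eClosedBall r).subset Set.inter_subset_right) (isBounded_eClosedBall s)
  rwa [Set.inter_assoc, Set.inter_eq_right.2 hsub] at this

theorem LocPolyConvexAt0.union {E F : Set (ℂ × ℂ)} (hE : LocPolyConvexAt0 E)
    (hF : LocPolyConvexAt0 F) (P : MvPolynomial (Fin 2) ℂ) {ε : ℝ} (hε : 0 < ε)
    (hP : ∀ z ∈ E ∪ F, (eval (coords z) P).im = 0 ∨
      ε * ‖eval (coords z) P‖ ≤ |(eval (coords z) P).im|)
    (hreal : ∀ z ∈ F, (eval (coords z) P).im = 0 → z ∈ E)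
    (hnonreal : ∀ z ∈ E, (eval (coords z) P).im ≠ 0 → z ∈ F) :
    LocPolyConvexAt0 (E ∪ F) := by
  obtain ⟨r₁, hr₁, hE⟩ := hE.exists_forall_le
  obtain ⟨r₂, hr₂, hF⟩ := hF.exists_forall_le
  set r := min r₁ r₂
  have hr : 0 < r := lt_min hr₁ hr₂
  specialize hE r hr.le (min_le_left _ _)
  specialize hF r hr.le (min_le_right _ _)
  have hbdd : ∀ S : Set (ℂ × ℂ), Bornology.IsBounded (S ∩ eClosedBall r) := fun _ =>
    (isBounded_eClosedBall r).subset Set.inter_subset_right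
  have : CompactSpace ↥((E ∪ F) ∩ eClosedBall r) := by
    rw [← isCompact_iff_compactSpace, Metric.isCompact_iff_isClosed_bounded]
    refine ⟨?_, hbdd _⟩
    rw [Set.union_inter_distrib_right]
    exact hE.isClosed.union hF.isClosed
  refine ⟨r, hr, ((polyHull2_subset_union_of_im P hε fun z hz => hP z hz.1).trans
    (Set.union_subset ?_ ?_)).antisymm (subset_polyHull2 (hbdd _))⟩
  · refine (polyHull2_mono (hbdd E) ?_).trans (hE.subset.trans ?_)
    · exact fun z ⟨⟨hz, hzr⟩, him⟩ => ⟨hz.elim id fun h => hreal z h him, hzr⟩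
    · exact Set.inter_subset_inter_left _ Set.subset_union_left
  · refine (polyHull2_mono (hbdd F) ?_).trans (hF.subset.trans ?_)
    · exact fun z ⟨⟨hz, hzr⟩, him⟩ => ⟨hz.elim (fun h => hnonreal z h him) id, hzr⟩
    · exact Set.inter_subset_inter_left _ Set.subset_union_right

end Hull

/-! ### Totally real planes -/

section Planes

open MvPolynomial (eval)

section Discriminant

variable {R : Type*} [CommRing R] [LinearOrder R] [IsStrictOrderedRing R]

lemma discrim_mul_add_sq_le_abs {a b c : R} (x y : R) :
    -discrim a b c * (x ^ 2 + y ^ 2) ≤ 4 * (|a| + |c|) * |a * x ^ 2 + b * x * y + c * y ^ 2| := by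
  set Q := a * x ^ 2 + b * x * y + c * y ^ 2 with hQ
  have hx : -discrim a b c * x ^ 2 ≤ 4 * (c * Q) := by
    rw [discrim, hQ]
    linear_combination sq_nonneg (2 * c * y + b * x)
  have hy : -discrim a b c * y ^ 2 ≤ 4 * (a * Q) := by
    rw [discrim, hQ]
    linear_combination sq_nonneg (2 * a * x + b * y)
  have ha : a * Q ≤ |a| * |Q| := (le_abs_self _).trans_eq (abs_mul _ _)
  have hc : c * Q ≤ |c| * |Q| := (le_abs_self _).trans_eq (abs_mul _ _)
  linarith

lemma abs_add_abs_pos_of_discrim_neg {a b c : R} (h : discrim a b c < 0) : 0 < |a| + |c| := by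
  have ha : a ≠ 0 := by
    rintro rfl
    exact h.not_ge (by rw [discrim]; nlinarith [sq_nonneg b])
  positivity

lemma eq_zero_of_discrim_neg {a b c x y : R} (h : discrim a b c < 0)
    (hxy : a * x ^ 2 + b * x * y + c * y ^ 2 = 0) : x = 0 ∧ y = 0 := by
  have hle := discrim_mul_add_sq_le_abs (a := a) (b := b) (c := c) x y
  rw [hxy, abs_zero, mul_zero] at hle
  have hsum : x ^ 2 + y ^ 2 ≤ 0 := nonpos_of_mul_nonpos_right hle (neg_pos.2 h)
  constructor <;> nlinarith [sq_nonneg x, sq_nonneg y]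

end Discriminant

lemma im_quadraticForm (α β γ : ℂ) (x y : ℝ) :
    (α * x ^ 2 + β * x * y + γ * y ^ 2).im = α.im * x ^ 2 + β.im * x * y + γ.im * y ^ 2 := by
  norm_cast
  simp only [add_im, im_mul_ofReal, mul_assoc]
  norm_cast
  simp only [im_mul_ofReal]

lemma exists_mul_norm_quadraticForm_le_abs_im {α β γ : ℂ} (h : discrim α.im β.im γ.im < 0) :
    ∃ ε > 0, ∀ x y : ℝ, ε * ‖α * x ^ 2 + β * x * y + γ * y ^ 2‖ ≤
      |(α * x ^ 2 + β * x * y + γ * y ^ 2).im| := by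
  have hsum := abs_add_abs_pos_of_discrim_neg h
  set d := -discrim α.im β.im γ.im
  set s := |α.im| + |γ.im|
  set S := ‖α‖ + ‖β‖ + ‖γ‖
  have hd : 0 < d := neg_pos.2 h
  have hS : 0 < S := by
    linarith [abs_im_le_norm α, abs_im_le_norm γ, norm_nonneg β]
  refine ⟨d / (4 * s * S), by positivity, fun x y => ?_⟩
  have hupper : ‖α * x ^ 2 + β * x * y + γ * y ^ 2‖ ≤ S * (x ^ 2 + y ^ 2) := by
    refine norm_add₃_le.trans ?_
    simp only [norm_mul, norm_pow, norm_real, Real.norm_eq_abs, sq_abs]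
    have hxy : |x| * |y| ≤ x ^ 2 + y ^ 2 := by
      rw [← sq_abs x, ← sq_abs y]
      nlinarith [sq_nonneg (|x| - |y|), sq_nonneg |x|, sq_nonneg |y|]
    nlinarith [mul_le_mul_of_nonneg_left hxy (norm_nonneg β), norm_nonneg α, norm_nonneg γ,
      sq_nonneg x, sq_nonneg y, mul_nonneg (norm_nonneg α) (sq_nonneg y),
      mul_nonneg (norm_nonneg γ) (sq_nonneg x)]
  rw [div_mul_eq_mul_div, div_le_iff₀ (by positivity), im_quadraticForm]
  calc d * ‖α * x ^ 2 + β * x * y + γ * y ^ 2‖ ≤ d * (S * (x ^ 2 + y ^ 2)) := by gcongr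
    _ = d * (x ^ 2 + y ^ 2) * S := by ring
    _ ≤ 4 * s * |α.im * x ^ 2 + β.im * x * y + γ.im * y ^ 2| * S :=
      mul_le_mul_of_nonneg_right (discrim_mul_add_sq_le_abs x y) hS.le
    _ = _ := by ring

/-- The quadratic form `det (z | Az)`, which vanishes exactly on the eigenvectors of `A`. It is the
separating polynomial: real on `ℝ²`, and a constant times a real function on `(A + iI)ℝ²`. -/
noncomputable def eigenForm (A : Matrix (Fin 2) (Fin 2) ℝ) : MvPolynomial (Fin 2) ℂ :=
  .X 0 * (.C (A 1 0 : ℂ) * .X 0 + .C (A 1 1 : ℂ) * .X 1) -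
    .X 1 * (.C (A 0 0 : ℂ) * .X 0 + .C (A 0 1 : ℂ) * .X 1)

variable (A B : Matrix (Fin 2) (Fin 2) ℝ)

lemma eval_eigenForm (z : ℂ × ℂ) : eval (coords z) (eigenForm A) =
    z.1 * (A 1 0 * z.1 + A 1 1 * z.2) - z.2 * (A 0 0 * z.1 + A 0 1 * z.2) := by
  simp [eigenForm, coords]

lemma im_eval_eigenForm_of_mem_plane0 {z : ℂ × ℂ} (hz : z ∈ plane0) :
    (eval (coords z) (eigenForm A)).im = 0 := by
  obtain ⟨x, y, rfl⟩ := hz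
  simp [eval_eigenForm]

lemma exists_cone_eigenForm_planeOf_self : ∃ ε > 0, ∀ z ∈ planeOf A,
    (eval (coords z) (eigenForm A)).im = 0 ∨
      ε * ‖eval (coords z) (eigenForm A)‖ ≤
        |(eval (coords z) (eigenForm A)).im| := by
  -- `δ = det (A + iI)`, since `det ((A + iI)v | A(A + iI)v) = det (A + iI) * det (v | Av)`
  set δ : ℂ := A.det - 1 + A.trace * I with hδ
  have heval : ∀ z ∈ planeOf A, ∃ t : ℝ,
      eval (coords z) (eigenForm A) = δ * t := by
    rintro _ ⟨x, y, rfl⟩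
    refine ⟨x * (A 1 0 * x + A 1 1 * y) - y * (A 0 0 * x + A 0 1 * y), ?_⟩
    rw [eval_eigenForm, hδ, Matrix.det_fin_two, Matrix.trace_fin_two]
    push_cast
    linear_combination (x * (A 1 0 * x + A 1 1 * y) - y * (A 0 0 * x + A 0 1 * y)) * I_sq
  rcases eq_or_ne δ.im 0 with h | h
  · refine ⟨1, one_pos, fun z hz => .inl ?_⟩
    obtain ⟨t, ht⟩ := heval z hz
    rw [ht, im_mul_ofReal, h, zero_mul]
  · have hδ0 : δ ≠ 0 := fun h0 => h (by rw [h0, zero_im])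
    refine ⟨|δ.im| / ‖δ‖, by positivity, fun z hz => .inr ?_⟩
    obtain ⟨t, ht⟩ := heval z hz
    rw [ht, im_mul_ofReal, norm_mul, norm_real, Real.norm_eq_abs, abs_mul, ← mul_assoc,
      div_mul_cancel₀ _ (norm_ne_zero_iff.2 hδ0)]

lemma exists_discrim_im_eq_and_eval_eigenForm_eq : ∃ α β γ : ℂ,
    discrim α.im β.im γ.im = 4 * (B.det * A.trace ^ 2 - betaQ A B) ∧
    ∀ z ∈ planeOf B, ∃ x y : ℝ, (x = 0 → y = 0 → z = 0) ∧
      eval (coords z) (eigenForm A) = α * x ^ 2 + β * x * y + γ * y ^ 2 := by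
  refine ⟨
    A 1 0 * (B 0 0 + I) ^ 2 + (A 1 1 - A 0 0) * (B 0 0 + I) * B 1 0 - A 0 1 * B 1 0 ^ 2,
    2 * A 1 0 * (B 0 0 + I) * B 0 1
      + (A 1 1 - A 0 0) * ((B 0 0 + I) * (B 1 1 + I) + B 0 1 * B 1 0)
      - 2 * A 0 1 * B 1 0 * (B 1 1 + I),
    A 1 0 * B 0 1 ^ 2 + (A 1 1 - A 0 0) * B 0 1 * (B 1 1 + I) - A 0 1 * (B 1 1 + I) ^ 2, ?_, ?_⟩
  · simp only [discrim, betaQ, Matrix.det_mul, Matrix.det_fin_two, Matrix.trace_fin_two,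
      Matrix.mul_apply, Fin.sum_univ_two]
    simp only [pow_two, add_im, sub_im, mul_im, add_re, sub_re, mul_re, I_re, I_im, ofReal_re,
      ofReal_im, re_ofNat, im_ofNat]
    ring
  · rintro _ ⟨x, y, rfl⟩
    refine ⟨x, y, by rintro rfl rfl; simp, ?_⟩
    rw [eval_eigenForm]
    push_cast
    ring

variable {A B}

lemma exists_cone_eigenForm_planeOf (hβ : B.det * A.trace ^ 2 < betaQ A B) :
    ∃ ε > 0, ∀ z ∈ planeOf B,
      ((eval (coords z) (eigenForm A)).im = 0 → z = 0) ∧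
        ε * ‖eval (coords z) (eigenForm A)‖ ≤
          |(eval (coords z) (eigenForm A)).im| := by
  obtain ⟨α, β, γ, hdiscrim, heval⟩ := exists_discrim_im_eq_and_eval_eigenForm_eq A B
  have hneg : discrim α.im β.im γ.im < 0 := by linarith
  obtain ⟨ε, hε, hcone⟩ := exists_mul_norm_quadraticForm_le_abs_im hneg
  refine ⟨ε, hε, fun z hz => ?_⟩
  obtain ⟨x, y, hxy, hz⟩ := heval z hz
  rw [hz]
  refine ⟨fun him => ?_, hcone x y⟩
  rw [im_quadraticForm] at him
  exact (eq_zero_of_discrim_neg hneg him).elim hxy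

theorem locPolyConvexAt0_union_of_lt_betaQ (h0A : LocPolyConvexAt0 (plane0 ∪ planeOf A))
    (hAB : LocPolyConvexAt0 (planeOf A ∪ planeOf B)) (hβ : B.det * A.trace ^ 2 < betaQ A B) :
    LocPolyConvexAt0 (plane0 ∪ planeOf A ∪ planeOf B) := by
  obtain ⟨ε₁, hε₁, hA⟩ := exists_cone_eigenForm_planeOf_self A
  obtain ⟨ε₂, hε₂, hB⟩ := exists_cone_eigenForm_planeOf hβ
  have hcover : plane0 ∪ planeOf A ∪ planeOf B =
      (plane0 ∪ planeOf A) ∪ (planeOf A ∪ planeOf B) := by grind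
  rw [hcover]
  refine h0A.union hAB (eigenForm A) (lt_min hε₁ hε₂) (fun z hz => ?_) (fun z hz him => ?_)
    fun z hz him => ?_
  · rw [← hcover] at hz
    rcases hz with (hz | hz) | hz
    · exact .inl (im_eval_eigenForm_of_mem_plane0 A hz)
    · exact (hA z hz).imp_right (le_trans (by gcongr; exact min_le_left _ _))
    · exact .inr (le_trans (by gcongr; exact min_le_right _ _) (hB z hz).2)
  · rcases hz with hz | hz
    · exact .inr hz
    · exact .inl ⟨0, 0, (hB z hz).1 him⟩
  · exact .inl (hz.resolve_left fun h => him (im_eval_eigenForm_of_mem_plane0 A h))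

end Planes

lemma betaQ_comm (A B : Matrix (Fin 2) (Fin 2) ℝ) : betaQ A B = betaQ B A := by
  rw [betaQ, betaQ, Matrix.det_mul_comm, Matrix.trace_mul_comm, mul_comm A.trace]

theorem stmt_16_general (A₁ A₂ : Matrix (Fin 2) (Fin 2) ℝ)
    (hpair01 : LocPolyConvexAt0 (plane0 ∪ planeOf A₁))
    (hpair02 : LocPolyConvexAt0 (plane0 ∪ planeOf A₂))
    (hpair12 : LocPolyConvexAt0 (planeOf A₁ ∪ planeOf A₂))
    (hbeta : min (A₂.det * A₁.trace ^ 2) (A₁.det * A₂.trace ^ 2) < betaQ A₁ A₂) :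
    LocPolyConvexAt0 (plane0 ∪ planeOf A₁ ∪ planeOf A₂) := by
  rcases min_lt_iff.1 hbeta with h | h
  · exact locPolyConvexAt0_union_of_lt_betaQ hpair01 hpair12 h
  · rw [Set.union_right_comm]
    rw [Set.union_comm] at hpair12
    exact locPolyConvexAt0_union_of_lt_betaQ hpair02 hpair12 (betaQ_comm A₁ A₂ ▸ h)

theorem stmt_16 (A₁ A₂ : Matrix (Fin 2) (Fin 2) ℝ)
    (htr0 : TotallyRealSet plane0)
    (htr1 : TotallyRealSet (planeOf A₁)) (htr2 : TotallyRealSet (planeOf A₂))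
    (hpair01 : LocPolyConvexAt0 (plane0 ∪ planeOf A₁))
    (hpair02 : LocPolyConvexAt0 (plane0 ∪ planeOf A₂))
    (hpair12 : LocPolyConvexAt0 (planeOf A₁ ∪ planeOf A₂))
    (hcomm : 0 < (A₁ * A₂ - A₂ * A₁).det)
    (hdet1 : A₁.det < 0) (hdet2 : A₂.det < 0)
    (hbeta : min (A₂.det * A₁.trace ^ 2) (A₁.det * A₂.trace ^ 2) < betaQ A₁ A₂) :
    LocPolyConvexAt0 (plane0 ∪ planeOf A₁ ∪ planeOf A₂) :=
  stmt_16_general A₁ A₂ hpair01 hpair02 hpair12 hbeta
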